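/- Let q be a prime power, n ≥ 4 even, s a positive integer with gcd(s, n) = 1, d ∈ F_{q^n}^*, and δ = d^{q^s − 1} (so that N_{q^n/q}(δ) = 1). Let f(x) = x + δ x^{q^{2s}} ∈ F_{q^n}[x]. Then (q² − 1) times the number of elements m ∈ F_{q^n} with dim_{F_q} ker(f(x) − m·x^{q^s}) = 2 equals the number of u ∈ F_{q^n}^* with Tr_{q^n/q}(d·u^{q^s + 1}) = 0, where Tr_{q^n/q} is the trace from F_{q^n} to F_q. -/

import Mathlib

/-!
Let `F` be the subfield of `K = F_{q^n}` with `q` elements, and let `σ x = x ^ q ^ s`, a generator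
of `Gal(K/F)`. Since `δ = σ d / d`, the points of weight two are the `m` for which
`x + δ σ²(x) = m σ(x)` has a two-dimensional solution space. If `x ≠ 0` is a solution, then `x z` is
one if and only if `d x σ(x) (σ z - z)` is fixed by `σ`, that is, `σ z - z ∈ F w` with
`w = (d x σ(x))⁻¹`. By the additive Hilbert 90 theorem, the image of `σ - 1` is the kernel of the
trace, so the solution space has dimension two if `Tr w = 0` and one otherwise. Each `x ≠ 0` is a
solution for exactly one `m`, so `q² - 1` times the number of these `m` is the number of `x ≠ 0`
with `Tr (d x σ(x))⁻¹ = 0`, and the substitution `x = (d σ(u))⁻¹` turns `(d x σ(x))⁻¹` into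
`σ (d u σ(u))`.
-/

open Module

theorem finrank_comap_eq_add {F V W : Type*} [DivisionRing F] [AddCommGroup V] [Module F V]
    [FiniteDimensional F V] [AddCommGroup W] [Module F W] (f : V →ₗ[F] W) (p : Submodule F W) :
    finrank F (p.comap f) = finrank F (f.range ⊓ p : Submodule F W) + finrank F f.ker := by
  have hker : f.ker ≤ p.comap f := fun v hv ↦ by simp [LinearMap.mem_ker.1 hv]
  rw [← LinearMap.finrank_range_add_finrank_ker (f.domRestrict (p.comap f)),
    LinearMap.range_domRestrict, Submodule.map_comap_eq, LinearMap.ker_domRestrict,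
    (Submodule.comapSubtypeEquivOfLe hker).finrank_eq]

theorem log_natCard_eq_finrank (F : Type*) {V : Type*} [DivisionRing F] [Finite F]
    [AddCommGroup V] [Module F V] [Module.Finite F V] :
    Nat.log (Nat.card F) (Nat.card V) = finrank F V := by
  rw [natCard_eq_pow_finrank (K := F) (V := V), Nat.log_pow Finite.one_lt_card]

theorem natCard_units_subtype {G₀ : Type*} [GroupWithZero G₀] (p : G₀ → Prop) :
    Nat.card {u : G₀ˣ // p u} = Nat.card {a : G₀ // a ≠ 0 ∧ p a} :=
  Nat.card_congr ((unitsEquivNeZero.subtypeEquiv fun _ ↦ Iff.rfl).trans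
    (Equiv.subtypeSubtypeEquivSubtypeInter (· ≠ 0) p))

section Galois

variable {F K : Type*} [Field F] [Field K] [Algebra F K] {σ : Gal(K/F)}

/-- The operator `σ - 1` attached to a Galois automorphism `σ`, as in the additive form of
Hilbert's Theorem 90. -/
def galSubOne (σ : Gal(K/F)) : K →ₗ[F] K :=
  σ.toLinearMap - LinearMap.id

@[simp]
theorem galSubOne_apply (x : K) : galSubOne σ x = σ x - x :=
  rfl

/-- The kernel of `f - m σ`, where `f = x + δ σ²(x)` is the LP-polynomial attached to `σ` and `δ`;
its dimension is the weight of the point `m` in the linear set of `f`. -/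
def lpKernel (σ : Gal(K/F)) (δ m : K) : Submodule F K :=
  (LinearMap.id + LinearMap.mulLeft F δ ∘ₗ (σ * σ).toLinearMap
    - LinearMap.mulLeft F m ∘ₗ σ.toLinearMap).ker

theorem mem_lpKernel {δ m x : K} : x ∈ lpKernel σ δ m ↔ x + δ * σ (σ x) = m * σ x := by
  simp [lpKernel, sub_eq_zero]

/-- The point `f x / σ x` of the linear set of the LP-polynomial `f = x + δ σ²(x)` defined by the
nonzero vector `x`. -/
def lpSlope (σ : Gal(K/F)) (δ : K) (x : Kˣ) : K :=
  (x + δ * σ (σ x)) / σ x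

theorem coe_mem_lpKernel_iff {δ m : K} {x : Kˣ} :
    (x : K) ∈ lpKernel σ δ m ↔ lpSlope σ δ x = m := by
  rw [mem_lpKernel, lpSlope, div_eq_iff (by simp)]

theorem trace_inv_mul_apply (d u : Kˣ) :
    Algebra.trace F K (d * ((d * σ u)⁻¹ * σ (d * σ u)⁻¹))⁻¹ =
      Algebra.trace F K (d * (u * σ u)) := by
  rw [← Algebra.trace_eq_of_algEquiv σ (d * (u * σ u) : K)]
  congr 1
  simp only [map_inv₀, map_mul]
  field_simp

theorem natCard_trace_inv_eq_zero (d : Kˣ) :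
    Nat.card {x : Kˣ // Algebra.trace F K (d * (x * σ x))⁻¹ = 0} =
      Nat.card {u : Kˣ // Algebra.trace F K (d * (u * σ u)) = 0} := by
  let e : Kˣ ≃ Kˣ :=
    (Units.mapEquiv σ.toMulEquiv).toEquiv.trans ((Equiv.mulLeft d).trans (Equiv.inv Kˣ))
  have he (u : Kˣ) : (e u : K) = (d * σ u)⁻¹ := by simp [e, mul_comm]
  refine (Nat.card_congr (e.subtypeEquiv fun u ↦ ?_)).symm
  rw [he, trace_inv_mul_apply]

section Cyclic

variable [FiniteDimensional F K] [IsGalois F K] (hσ : ∀ τ : Gal(K/F), τ ∈ Subgroup.zpowers σ)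
include hσ

theorem ker_galSubOne : (galSubOne σ).ker = 1 := by
  ext x
  have hfix : (∀ τ : Gal(K/F), τ x = x) ↔ σ x = x := by
    refine ⟨fun h ↦ h σ, fun h τ ↦ ?_⟩
    have hle : Subgroup.zpowers σ ≤ MulAction.stabilizer Gal(K/F) x := Subgroup.zpowers_le.2 h
    exact hle (hσ τ)
  rw [LinearMap.mem_ker, galSubOne_apply, sub_eq_zero, ← hfix,
    ← IsGalois.mem_range_algebraMap_iff_fixed, Submodule.mem_one, Set.mem_range]

theorem finrank_ker_galSubOne : finrank F (galSubOne σ).ker = 1 := by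
  rw [ker_galSubOne hσ, Submodule.one_eq_span, finrank_span_singleton one_ne_zero]

theorem range_galSubOne_eq_ker_trace : (galSubOne σ).range = (Algebra.trace F K).ker := by
  refine Submodule.eq_of_le_of_finrank_eq ?_ ?_
  · rintro _ ⟨x, rfl⟩
    simp [Algebra.trace_eq_of_algEquiv]
  · have hdiff := (galSubOne σ).finrank_range_add_finrank_ker
    have htrace := (Algebra.trace F K).finrank_range_add_finrank_ker
    rw [finrank_ker_galSubOne hσ] at hdiff
    rw [LinearMap.range_eq_top.2 (Algebra.trace_surjective F K), finrank_top, finrank_self]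
      at htrace
    lia

theorem finrank_comap_galSubOne_span_singleton_eq_two_iff {w : K} (hw : w ≠ 0) :
    finrank F ((Submodule.span F {w}).comap (galSubOne σ)) = 2 ↔ Algebra.trace F K w = 0 := by
  rw [finrank_comap_eq_add, finrank_ker_galSubOne hσ, range_galSubOne_eq_ker_trace hσ]
  by_cases htr : Algebra.trace F K w = 0
  · have hle : Submodule.span F {w} ≤ (Algebra.trace F K).ker := by simpa using htr
    rw [inf_eq_right.2 hle, finrank_span_singleton hw]
    exact iff_of_true rfl htr
  · have hdisj : Disjoint (Algebra.trace F K).ker (Submodule.span F {w}) :=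
      (Submodule.disjoint_span_singleton' hw).2 htr
    rw [hdisj.eq_bot, finrank_bot]
    exact iff_of_false (by decide) htr

theorem mem_span_singleton_iff_apply_div_eq {v w : K} (hw : w ≠ 0) :
    v ∈ Submodule.span F {w} ↔ σ (v / w) = v / w := by
  rw [← sub_eq_zero, ← galSubOne_apply, ← LinearMap.mem_ker, ker_galSubOne hσ, Submodule.mem_one,
    Submodule.mem_span_singleton]
  simp only [eq_div_iff hw, Algebra.smul_def]

theorem mul_mem_lpKernel_iff {d x : Kˣ} {m : K} (hx : (x : K) ∈ lpKernel σ (σ d / d) m) (z : K) :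
    x * z ∈ lpKernel σ (σ d / d) m ↔
      galSubOne σ z ∈ Submodule.span F {(d * (x * σ x) : K)⁻¹} := by
  have hx' : d * x + σ d * σ (σ x) = d * m * σ x := by
    rw [mem_lpKernel] at hx
    field_simp at hx
    linear_combination hx
  have hdiff : (σ (σ z) - σ z) * (σ d * (σ x * σ (σ x))) - (σ z - z) * (d * (x * σ x)) =
      d * σ x * (x * z + σ d / d * (σ (σ x) * σ (σ z)) - m * (σ x * σ z)) := by
    field_simp
    linear_combination (-σ z) * hx'
  rw [mem_span_singleton_iff_apply_div_eq hσ (by simp), mem_lpKernel, galSubOne_apply]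
  simp only [div_inv_eq_mul, map_mul, map_sub]
  rw [← sub_eq_zero, ← sub_eq_zero (a := _ * _), hdiff]
  simp

theorem finrank_lpKernel_eq_two_iff {d x : Kˣ} {m : K} (hx : (x : K) ∈ lpKernel σ (σ d / d) m) :
    finrank F (lpKernel σ (σ d / d) m) = 2 ↔ Algebra.trace F K (d * (x * σ x))⁻¹ = 0 := by
  have hcomap : (Submodule.span F {(d * (x * σ x) : K)⁻¹}).comap (galSubOne σ) =
      (lpKernel σ (σ d / d) m).comap (DistribMulAction.toLinearEquiv F K x).toLinearMap :=
    Submodule.ext fun z ↦ (mul_mem_lpKernel_iff hσ hx z).symm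
  rw [← finrank_comap_galSubOne_span_singleton_eq_two_iff hσ (by simp), hcomap,
    Submodule.comap_equiv_eq_map_symm, LinearEquiv.finrank_map_eq]

end Cyclic

variable [Finite K]

theorem natCard_lpSlope_fiber (δ m : K) :
    Nat.card {x : Kˣ // lpSlope σ δ x = m} = Nat.card (lpKernel σ δ m) - 1 := by
  classical
  let := Fintype.ofFinite (lpKernel σ δ m)
  let e : {x : Kˣ // lpSlope σ δ x = m} ≃ {x : lpKernel σ δ m | x ≠ 0} :=
    { toFun x := ⟨⟨x.1, coe_mem_lpKernel_iff.2 x.2⟩, by simp⟩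
      invFun x :=
        ⟨Units.mk0 x.1.1 fun h ↦ x.2 (Subtype.ext h), coe_mem_lpKernel_iff.1 x.1.2⟩ }
  rw [Nat.card_congr e, Nat.card_eq_fintype_card, Set.card_ne_eq, Nat.card_eq_fintype_card]

theorem pow_sub_one_mul_natCard_finrank_lpKernel_eq (δ : K) (k : ℕ) :
    (Nat.card F ^ k - 1) * Nat.card {m : K // finrank F (lpKernel σ δ m) = k} =
      Nat.card {x : Kˣ // finrank F (lpKernel σ δ (lpSlope σ δ x)) = k} := by
  let := Fintype.ofFinite {m : K // finrank F (lpKernel σ δ m) = k}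
  have hfiber (m : {m : K // finrank F (lpKernel σ δ m) = k}) :
      Nat.card {x : Kˣ // lpSlope σ δ x = m} = Nat.card F ^ k - 1 := by
    rw [natCard_lpSlope_fiber, natCard_eq_pow_finrank (K := F), m.2]
  rw [← Nat.card_congr (Equiv.sigmaSubtypeFiberEquivSubtype (lpSlope σ δ)
      (q := fun m ↦ finrank F (lpKernel σ δ m) = k) fun _ ↦ Iff.rfl),
    Nat.card_sigma, Finset.sum_congr rfl fun m _ ↦ hfiber m, Finset.sum_const, Finset.card_univ,
    smul_eq_mul, mul_comm, Nat.card_eq_fintype_card]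

theorem sq_sub_one_mul_natCard_finrank_lpKernel_eq_two
    (hσ : ∀ τ : Gal(K/F), τ ∈ Subgroup.zpowers σ) (d : Kˣ) :
    (Nat.card F ^ 2 - 1) * Nat.card {m : K // finrank F (lpKernel σ (σ d / d) m) = 2} =
      Nat.card {u : Kˣ // Algebra.trace F K (d * (u * σ u)) = 0} := by
  rw [pow_sub_one_mul_natCard_finrank_lpKernel_eq, ← natCard_trace_inv_eq_zero d]
  simp only [finrank_lpKernel_eq_two_iff hσ (coe_mem_lpKernel_iff.2 rfl)]

end Galois

section FiniteField

variable {K : Type*} [Field K] [Finite K]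

theorem exists_subfield_natCard_eq {q n : ℕ} (hK : Nat.card K = q ^ n) :
    ∃ F : Subfield K, Nat.card F = q := by
  have hn : n ≠ 0 := by
    rintro rfl
    exact Finite.one_lt_card.ne' hK
  obtain ⟨p, hp⟩ := CharP.exists K
  have : Fact p.Prime := ⟨CharP.char_is_prime K p⟩
  let := ZMod.algebra K p
  have hcard := FiniteField.pow_finrank_eq_natCard p K
  obtain ⟨e, -, rfl⟩ : ∃ e ≤ finrank (ZMod p) K, q = p ^ e :=
    (Nat.dvd_prime_pow Fact.out).1 (by rw [hcard, hK]; exact dvd_pow_self q hn)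
  have hfinrank : finrank (ZMod p) K = e * n :=
    Nat.pow_right_injective (Fact.out : p.Prime).two_le (by simp [hcard, hK, pow_mul])
  have he : e ≠ 0 := by
    rintro rfl
    simpa [hfinrank] using (finrank_pos : 0 < finrank (ZMod p) K)
  obtain ⟨φ⟩ : Nonempty (GaloisField p e →ₐ[ZMod p] K) :=
    FiniteField.nonempty_algHom_of_finrank_dvd (by simp [GaloisField.finrank, he, hfinrank])
  refine ⟨φ.toRingHom.fieldRange, ?_⟩
  rw [← Nat.card_congr φ.toRingHom.rangeRestrictFieldEquiv.toEquiv]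
  exact GaloisField.card p e he

variable {F : Type*} [Field F] [Algebra F K]

theorem exists_gal_generator_eq_pow {s : ℕ} (hs : s.Coprime (finrank F K)) :
    ∃ σ : Gal(K/F), (∀ τ, τ ∈ Subgroup.zpowers σ) ∧ ∀ x, σ x = x ^ Nat.card F ^ s := by
  have : Finite F := .of_injective _ (algebraMap F K).injective
  let := Fintype.ofFinite F
  let φ := FiniteField.frobeniusAlgEquivOfAlgebraic F K
  refine ⟨φ ^ s, fun τ ↦ ?_, fun x ↦ ?_⟩
  · obtain ⟨i, rfl⟩ := (FiniteField.bijective_frobeniusAlgEquivOfAlgebraic_pow F K).2 τ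
    refine pow_mem (mem_zpowers_pow_iff.2 ?_) _
    rwa [FiniteField.orderOf_frobeniusAlgEquivOfAlgebraic]
  · rw [AlgEquiv.coe_pow, FiniteField.coe_frobeniusAlgEquivOfAlgebraic_iterate,
      Fintype.card_eq_nat_card]

theorem trace_eq_zero_iff_sum_pow_eq_zero {x : K} :
    Algebra.trace F K x = 0 ↔ ∑ i ∈ Finset.range (finrank F K), x ^ Nat.card F ^ i = 0 := by
  rw [← FiniteField.algebraMap_trace_eq_sum_pow, map_eq_zero_iff _ (algebraMap F K).injective]

end FiniteField

theorem stmt_13_general {q n s : ℕ} {K : Type*} [Field K] [Finite K] (hK : Nat.card K = q ^ n)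
    (hs : s.Coprime n) {d : K} (hd : d ≠ 0) :
    (q ^ 2 - 1) *
        Nat.card {m : K // Nat.log q (Nat.card
          {x : K // x + d ^ (q ^ s - 1) * x ^ q ^ (2 * s) = m * x ^ q ^ s}) = 2}
      = Nat.card {u : K //
          u ≠ 0 ∧ ∑ i ∈ Finset.range n, (d * u ^ (q ^ s + 1)) ^ q ^ i = 0} := by
  obtain ⟨F, rfl⟩ := exists_subfield_natCard_eq hK
  obtain rfl : n = finrank F K := Nat.pow_right_injective
    (Finite.one_lt_card (α := F)) (hK.symm.trans natCard_eq_pow_finrank)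
  obtain ⟨σ, hgen, hσ⟩ := exists_gal_generator_eq_pow hs
  lift d to Kˣ using hd.isUnit
  have hδ : (d : K) ^ (Nat.card F ^ s - 1) = σ d / d := by
    rw [hσ, eq_div_iff hd, pow_sub_one_mul (pow_ne_zero _ Nat.card_pos.ne')]
  have hker (m x : K) : x + d ^ (Nat.card F ^ s - 1) * x ^ Nat.card F ^ (2 * s) =
      m * x ^ Nat.card F ^ s ↔ x ∈ lpKernel σ (σ d / d) m := by
    rw [mem_lpKernel, hδ, two_mul, pow_add, pow_mul, ← hσ, ← hσ]
  have htrace (u : K) : ∑ i ∈ Finset.range (finrank F K),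
      (d * u ^ (Nat.card F ^ s + 1)) ^ Nat.card F ^ i = 0 ↔
        Algebra.trace F K (d * (u * σ u)) = 0 := by
    rw [trace_eq_zero_iff_sum_pow_eq_zero, hσ, pow_succ']
  simp only [hker, htrace, log_natCard_eq_finrank F]
  rw [sq_sub_one_mul_natCard_finrank_lpKernel_eq_two hgen d, natCard_units_subtype fun u : K ↦
    Algebra.trace F K (d * (u * σ u)) = 0]

/-- Proposition `th:correspondence`: for `n ≥ 4` even, `gcd(s,n) = 1`,
`d ∈ F_{q^n}^*` and `δ = d^{q^s-1}`, the number of points of weight two of the linear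
set of the LP-polynomial `f(x) = x + δ x^{q^{2s}}` of index `s` — i.e. the number of
`m ∈ F_{q^n}` with `dim_{F_q} ker(f - m·x^{q^s}) = 2` (dimension encoded as `Nat.log q`
of the kernel cardinality) — multiplied by `q² - 1`, equals the number of `u ≠ 0` with
`Tr_{q^n/q}(d·u^{q^s+1}) = 0`. -/
theorem stmt_13 (p e q n s : ℕ) (hp : p.Prime) (he : 1 ≤ e) (hq : q = p ^ e)
    (hn : 4 ≤ n) (heven : Even n) (hs : 1 ≤ s) (hgcd : Nat.gcd s n = 1)
    (K : Type) [Field K] [Fintype K] (hK : Fintype.card K = q ^ n)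
    (d : K) (hd : d ≠ 0) (δ : K) (hδ : δ = d ^ (q ^ s - 1))
    (f : K → K) (hf : f = fun x => x + δ * x ^ q ^ (2 * s)) :
    (q ^ 2 - 1) *
        Nat.card {m : K // Nat.log q (Nat.card {x : K // f x = m * x ^ q ^ s}) = 2}
      = Nat.card {u : K //
          u ≠ 0 ∧ ∑ i ∈ Finset.range n, (d * u ^ (q ^ s + 1)) ^ q ^ i = 0} := by
  subst hδ hf
  exact stmt_13_general (Nat.card_eq_fintype_card.trans hK) hgcd hd
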